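/- arXiv:1106.2859 — 2 statements merged into one kernel-verified Lean document; each statement's English description precedes it below -/
import Mathlib

section
/- Let k be a field and α ≥ 1 an integer. The quotient of the polynomial ring k[X] by the k-subalgebra generated by X² and X^{2α+1} (taken as a quotient of k-vector spaces, dividing by the underlying k-submodule of the subalgebra) has dimension α over k. -/
open Polynomial

/-! The powers of `X` form a basis of `R[X]`, and the powers with exponent in the numerical
semigroup generated by `2` and `2α + 1` form a basis of the subalgebra. The quotient therefore has a
basis indexed by the gaps of the semigroup, which are the odd numbers `1, 3, …, 2α - 1`. -/

section BasisQuotient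

variable {R M ι : Type*} [Ring R] [AddCommGroup M] [Module R M]

theorem ker_lsubtypeDomain_compl_comp_repr (b : Module.Basis ι R M) (s : Set ι) :
    LinearMap.ker (Finsupp.lsubtypeDomain sᶜ ∘ₗ (b.repr : M →ₗ[R] ι →₀ R)) =
      Submodule.span R (b '' s) := by
  ext m
  simp only [LinearMap.mem_ker, LinearMap.comp_apply, LinearEquiv.coe_coe,
    Finsupp.lsubtypeDomain_apply, b.mem_span_image, Finsupp.subtypeDomain_eq_zero_iff']
  simp only [Set.subset_def, Finset.mem_coe, Finsupp.mem_support_iff, Set.mem_compl_iff,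
    not_imp_comm]

-- For infinite `sᶜ` both sides are the junk value `0`.
theorem finrank_quotient_span_basis_image [StrongRankCondition R] (b : Module.Basis ι R M)
    (s : Set ι) : Module.finrank R (M ⧸ Submodule.span R (b '' s)) = sᶜ.ncard := by
  have hsurj : Function.Surjective
      (Finsupp.lsubtypeDomain sᶜ ∘ₗ (b.repr : M →ₗ[R] ι →₀ R)) := by
    classical
    exact (Function.RightInverse.surjective Finsupp.subtypeDomain_extendDomain).comp
      b.repr.surjective
  rw [← ker_lsubtypeDomain_compl_comp_repr,
    Module.finrank_eq_nat_card_basis (.ofRepr (LinearMap.quotKerEquivOfSurjective _ hsurj)),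
    Nat.card_coe_set_eq]

end BasisQuotient

theorem coe_closure_pow_image {M : Type*} [Monoid M] (x : M) (T : Set ℕ) :
    (Submonoid.closure ((x ^ ·) '' T) : Set M) =
      (x ^ ·) '' (AddSubmonoid.closure T : Set ℕ) := by
  have h := MonoidHom.map_mclosure (powersHom M x) (Multiplicative.toAdd ⁻¹' T)
  rw [← AddSubmonoid.toSubmonoid_closure] at h
  exact (congrArg SetLike.coe h).symm

theorem toSubmodule_adjoin_pow_image {R A : Type*} [CommSemiring R] [Semiring A] [Algebra R A]
    (x : A) (T : Set ℕ) :
    Subalgebra.toSubmodule (Algebra.adjoin R ((x ^ ·) '' T)) =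
      Submodule.span R ((x ^ ·) '' (AddSubmonoid.closure T : Set ℕ)) := by
  rw [Algebra.adjoin_eq_span, coe_closure_pow_image]

theorem finrank_quotient_adjoin_X_pow_image {R : Type*} [CommRing R] [Nontrivial R] (T : Set ℕ) :
    Module.finrank R
      (R[X] ⧸ Subalgebra.toSubmodule (Algebra.adjoin R (((X : R[X]) ^ ·) '' T))) =
        (AddSubmonoid.closure T : Set ℕ)ᶜ.ncard := by
  have hbasis : ((X : R[X]) ^ ·) = basisMonomials R := by
    simp only [coe_basisMonomials, monomial_one_right_eq_X_pow]
  rw [toSubmodule_adjoin_pow_image, hbasis, finrank_quotient_span_basis_image]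

theorem mem_closure_two_odd_iff {m n : ℕ} (hm : Odd m) :
    n ∈ AddSubmonoid.closure {2, m} ↔ Even n ∨ m ≤ n := by
  simp only [AddSubmonoid.mem_closure_pair, smul_eq_mul]
  constructor
  · rintro ⟨a, b, rfl⟩
    rcases b.eq_zero_or_pos with rfl | hb
    · exact .inl (by simp)
    · exact .inr (by nlinarith)
  · rintro (⟨a, rfl⟩ | hmn)
    · exact ⟨a, 0, by ring⟩
    · rcases n.even_or_odd with ⟨a, rfl⟩ | hn
      · exact ⟨a, 0, by ring⟩
      · obtain ⟨a, ha⟩ := Nat.Odd.sub_odd hn hm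
        exact ⟨a, 1, by lia⟩

theorem compl_closure_two_odd (α : ℕ) :
    (AddSubmonoid.closure {2, 2 * α + 1} : Set ℕ)ᶜ = (2 * · + 1) '' Set.Iio α := by
  ext n
  simp only [Set.mem_compl_iff, SetLike.mem_coe, mem_closure_two_odd_iff (odd_two_mul_add_one α),
    not_or, Nat.not_even_iff_odd, not_le, Set.mem_image, Set.mem_Iio]
  constructor
  · rintro ⟨⟨i, rfl⟩, hi⟩
    exact ⟨i, by lia, rfl⟩
  · rintro ⟨i, hi, rfl⟩
    exact ⟨odd_two_mul_add_one i, by lia⟩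

theorem finrank_quotient_cusp_zero_general (R : Type*) [CommRing R] [Nontrivial R] (α : ℕ) :
    Module.finrank R
      (R[X] ⧸ Subalgebra.toSubmodule
        (Algebra.adjoin R ({X ^ 2, X ^ (2 * α + 1)} : Set R[X]))) = α := by
  have hinj : Function.Injective (2 * · + 1 : ℕ → ℕ) := fun i j h => by lia
  rw [← Set.image_pair (X ^ ·), finrank_quotient_adjoin_X_pow_image, compl_closure_two_odd,
    Set.ncard_image_of_injective _ hinj, Set.ncard_Iio_nat]

/-- The quotient of `k[X]` by the `k`-subalgebra generated by `X²` and `X^(2α+1)`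
(as a quotient of `k`-vector spaces) has dimension `α`. -/
theorem finrank_quotient_cusp_zero (k : Type*) [Field k] (α : ℕ) (hα : 1 ≤ α) :
    Module.finrank k
      (k[X] ⧸ Subalgebra.toSubmodule
        (Algebra.adjoin k ({X ^ 2, X ^ (2 * α + 1)} : Set k[X]))) = α :=
  finrank_quotient_cusp_zero_general k α
end

section
/- Let k be a field and α ≥ 1 an integer, and let A ⊆ k[X] be the k-subalgebra generated by X² and X^{2α+1}. Then the set of trailing degrees (orders of vanishing at 0) of the nonzero elements of A equals the additive submonoid of ℕ generated by {2, 2α+1}. -/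
open Polynomial

/-!
A subalgebra of `R[X]` generated by monomials is spanned by monomials, namely by the `X ^ n` with
`n` in the semigroup generated by the exponents. Hence membership is a condition on supports: the
trailing degree of a nonzero element, being an exponent that occurs in it, lies in the semigroup,
and conversely `X ^ n` itself realizes every `n` in the semigroup.
-/

section SemigroupSubalgebra

variable (R : Type*) [CommSemiring R]

/-- The semigroup algebra `R[S]` of an additive submonoid `S` of `ℕ`, realized inside `R[X]` as the
polynomials all of whose exponents lie in `S`. -/
def semigroupSubalgebra (S : AddSubmonoid ℕ) : Subalgebra R R[X] where
  carrier := {p | ∀ n ∈ p.support, n ∈ S}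
  mul_mem' {p q} hp hq n hn := by
    rw [mem_support_iff, coeff_mul] at hn
    obtain ⟨⟨i, j⟩, hij, hne⟩ := Finset.exists_ne_zero_of_sum_ne_zero hn
    rw [← Finset.HasAntidiagonal.mem_antidiagonal.mp hij]
    exact add_mem (hp i (mem_support_iff.mpr (left_ne_zero_of_mul hne)))
      (hq j (mem_support_iff.mpr (right_ne_zero_of_mul hne)))
  add_mem' {p q} hp hq n hn :=
    (Finset.mem_union.mp (support_add hn)).elim (hp n) (hq n)
  algebraMap_mem' r n hn := by
    rw [Finset.mem_singleton.mp (support_C_subset r hn)]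
    exact S.zero_mem

variable {R}

lemma mem_semigroupSubalgebra_iff {S : AddSubmonoid ℕ} {p : R[X]} :
    p ∈ semigroupSubalgebra R S ↔ ∀ n ∈ p.support, n ∈ S :=
  Iff.rfl

lemma X_pow_mem_semigroupSubalgebra {S : AddSubmonoid ℕ} {n : ℕ} (hn : n ∈ S) :
    (X : R[X]) ^ n ∈ semigroupSubalgebra R S := by
  refine mem_semigroupSubalgebra_iff.mpr fun m hm ↦ ?_
  rw [X_pow_eq_monomial] at hm
  rwa [Finset.mem_singleton.mp (support_monomial_subset n 1 hm)]

lemma X_pow_mem_adjoin_of_mem_closure {s : Set ℕ} {n : ℕ} (hn : n ∈ AddSubmonoid.closure s) :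
    (X : R[X]) ^ n ∈ Algebra.adjoin R ((fun i : ℕ ↦ (X : R[X]) ^ i) '' s) := by
  induction hn using AddSubmonoid.closure_induction with
  | mem i hi => exact Algebra.subset_adjoin (Set.mem_image_of_mem _ hi)
  | zero => simp
  | add i j _ _ hi hj => simpa only [pow_add] using mul_mem hi hj

variable (R)

lemma adjoin_X_pow_eq_semigroupSubalgebra (s : Set ℕ) :
    Algebra.adjoin R ((fun i : ℕ ↦ (X : R[X]) ^ i) '' s) =
      semigroupSubalgebra R (AddSubmonoid.closure s) := by
  apply le_antisymm
  · rw [Algebra.adjoin_le_iff]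
    rintro _ ⟨i, hi, rfl⟩
    exact X_pow_mem_semigroupSubalgebra (AddSubmonoid.subset_closure hi)
  · intro p hp
    rw [p.as_sum_support_C_mul_X_pow]
    refine sum_mem fun n hn ↦ ?_
    have hnS := mem_semigroupSubalgebra_iff.mp hp n hn
    rw [← smul_eq_C_mul]
    exact Subalgebra.smul_mem _ (X_pow_mem_adjoin_of_mem_closure hnS) _

lemma setOf_natTrailingDegree_semigroupSubalgebra [Nontrivial R] (S : AddSubmonoid ℕ) :
    {n : ℕ | ∃ p ∈ semigroupSubalgebra R S, p ≠ 0 ∧ p.natTrailingDegree = n} = S := by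
  ext n
  constructor
  · rintro ⟨p, hp, hp0, rfl⟩
    exact mem_semigroupSubalgebra_iff.mp hp _ (natTrailingDegree_mem_support_of_nonzero hp0)
  · intro hn
    refine ⟨X ^ n, X_pow_mem_semigroupSubalgebra hn, (monic_X_pow n).ne_zero, ?_⟩
    rw [X_pow_eq_monomial, natTrailingDegree_monomial one_ne_zero]

theorem valuation_semigroup_cusp_zero_general [Nontrivial R] (s : Set ℕ) :
    {n : ℕ | ∃ p ∈ Algebra.adjoin R ((fun i : ℕ ↦ (X : R[X]) ^ i) '' s),
        p ≠ 0 ∧ p.natTrailingDegree = n} = AddSubmonoid.closure s := by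
  rw [adjoin_X_pow_eq_semigroupSubalgebra, setOf_natTrailingDegree_semigroupSubalgebra]

end SemigroupSubalgebra

/-- The set of orders of vanishing at `0` (trailing degrees) of the nonzero
elements of the subalgebra `k[X², X^(2α+1)] ⊆ k[X]` is the numerical semigroup
generated by `{2, 2α+1}`. -/
theorem valuation_semigroup_cusp_zero (k : Type*) [Field k] (α : ℕ) (hα : 1 ≤ α) :
    {n : ℕ | ∃ p : k[X],
        p ∈ Algebra.adjoin k ({X ^ 2, X ^ (2 * α + 1)} : Set k[X]) ∧ p ≠ 0 ∧
        p.natTrailingDegree = n} =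
      ↑(AddSubmonoid.closure ({2, 2 * α + 1} : Set ℕ)) := by
  simpa only [Set.image_pair] using valuation_semigroup_cusp_zero_general k {2, 2 * α + 1}
end
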